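/- arXiv:math/0701825 — 4 statements merged into one kernel-verified Lean document; each statement's English description precedes it below -/
import Mathlib

section
/- Let n ≥ 1, let Q be a polynomial in n real variables which is homogeneous of degree 2 and positive definite as a function on ℝⁿ (Q(x) > 0 for all x ≠ 0), and let q be any polynomial in n variables. Then for every index i the Lebesgue integral over ℝⁿ of the i-th partial derivative of the function x ↦ q(x)·e^{−Q(x)} vanishes; explicitly, ∫_{ℝⁿ} (∂ᵢq(x) − q(x)·∂ᵢQ(x))·e^{−Q(x)} dx = 0. -/
open MvPolynomial MeasureTheory

/-- The partial derivative of a polynomial computes the derivative of its evaluation along the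
corresponding coordinate direction. -/
theorem MvPolynomial.hasLineDerivAt_eval {σ 𝕜 : Type*} [DecidableEq σ] [NontriviallyNormedField 𝕜]
    (p : MvPolynomial σ 𝕜) (i : σ) (x : σ → 𝕜) :
    HasLineDerivAt 𝕜 (fun y ↦ eval y p) (eval x (pderiv i p)) x (Pi.single i 1) := by
  unfold HasLineDerivAt
  induction p using MvPolynomial.induction_on with
  | C a => simpa using hasDerivAt_const (0 : 𝕜) a
  | add p q hp hq => simpa using hp.fun_add hq
  | mul_X p j hp =>
    have hX : HasDerivAt (fun t : 𝕜 ↦ x j + t * (Pi.single i 1 : σ → 𝕜) j)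
        ((Pi.single i 1 : σ → 𝕜) j) 0 := by
      simpa using ((hasDerivAt_id (0 : 𝕜)).mul_const ((Pi.single i 1 : σ → 𝕜) j)).const_add (x j)
    have hmul := hp.fun_mul hX
    simp only [map_mul, eval_X, Pi.add_apply, Pi.smul_apply, smul_eq_mul]
    convert! hmul using 1
    simp [pderiv_X, Pi.single_apply, apply_ite (eval x), eq_comm]
    ring

/-- The evaluation of a real polynomial grows at most polynomially. -/
theorem MvPolynomial.exists_abs_eval_le {σ : Type*} [Fintype σ] (p : MvPolynomial σ ℝ) :
    ∃ (C : ℝ) (k : ℕ), 0 ≤ C ∧ ∀ x : σ → ℝ, |eval x p| ≤ C * (1 + ‖x‖) ^ k := by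
  induction p using MvPolynomial.induction_on with
  | C a => exact ⟨|a|, 0, abs_nonneg a, fun x ↦ by simp⟩
  | add p q hp hq =>
    obtain ⟨C, k, hC, hp⟩ := hp
    obtain ⟨D, l, hD, hq⟩ := hq
    refine ⟨C + D, max k l, add_nonneg hC hD, fun x ↦ ?_⟩
    have hx : 1 ≤ 1 + ‖x‖ := by simp
    calc |eval x (p + q)| ≤ |eval x p| + |eval x q| := by
          rw [map_add]; exact abs_add_le _ _
      _ ≤ C * (1 + ‖x‖) ^ k + D * (1 + ‖x‖) ^ l := add_le_add (hp x) (hq x)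
      _ ≤ C * (1 + ‖x‖) ^ max k l + D * (1 + ‖x‖) ^ max k l := by
          gcongr <;> first | exact hx | simp
      _ = (C + D) * (1 + ‖x‖) ^ max k l := by ring
  | mul_X p j hp =>
    obtain ⟨C, k, hC, hp⟩ := hp
    refine ⟨C, k + 1, hC, fun x ↦ ?_⟩
    have hj : |x j| ≤ 1 + ‖x‖ := (norm_le_pi_norm x j).trans (by simp)
    rw [map_mul, eval_X, abs_mul, pow_succ, ← mul_assoc]
    exact mul_le_mul (hp x) hj (abs_nonneg _) (by positivity)

/-- Evaluating a homogeneous polynomial of degree `m` at a scaled point multiplies its value by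
the `m`-th power of the scalar. -/
theorem MvPolynomial.IsHomogeneous.eval_smul {σ R : Type*} [CommSemiring R]
    {p : MvPolynomial σ R} {m : ℕ} (hp : p.IsHomogeneous m) (c : R) (x : σ → R) :
    eval (c • x) p = c ^ m * eval x p := by
  rw [eval_eq, eval_eq, Finset.mul_sum]
  refine Finset.sum_congr rfl fun d hd ↦ ?_
  have hdeg : ∑ i ∈ d.support, d i = m := by
    rw [← hp (mem_support_iff.mp hd), Finsupp.weight_apply]
    simp [Finsupp.sum]
  simp only [Pi.smul_apply, smul_eq_mul, mul_pow, Finset.prod_mul_distrib,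
    Finset.prod_pow_eq_pow_sum, hdeg]
  ring

/-- A positive definite quadratic form is bounded below by a positive multiple of the squared
norm. -/
theorem MvPolynomial.IsHomogeneous.exists_mul_norm_sq_le_eval {σ : Type*} [Fintype σ]
    {Q : MvPolynomial σ ℝ} (hQ : Q.IsHomogeneous 2)
    (hpos : ∀ x : σ → ℝ, x ≠ 0 → 0 < eval x Q) :
    ∃ c : ℝ, 0 < c ∧ ∀ x : σ → ℝ, c * ‖x‖ ^ 2 ≤ eval x Q := by
  obtain ⟨c, hc, hle⟩ := (isCompact_sphere (0 : σ → ℝ) 1).exists_forall_le'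
    Q.continuous_eval.continuousOn (a := 0)
    fun x hx ↦ hpos x (ne_zero_of_mem_unit_sphere ⟨x, hx⟩)
  refine ⟨c, hc, fun x ↦ ?_⟩
  rcases eq_or_ne x 0 with rfl | hx
  · have h0 := hQ.eval_smul 0 (0 : σ → ℝ)
    rw [zero_smul, zero_pow two_ne_zero, zero_mul] at h0
    rw [h0, norm_zero, zero_pow two_ne_zero, mul_zero]
  · have hx' : ‖x‖ ≠ 0 := norm_ne_zero_iff.mpr hx
    have hunit : ‖x‖⁻¹ • x ∈ Metric.sphere (0 : σ → ℝ) 1 := by simp [norm_smul, hx']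
    calc c * ‖x‖ ^ 2 ≤ eval (‖x‖⁻¹ • x) Q * ‖x‖ ^ 2 := by gcongr; exact hle _ hunit
      _ = eval x Q := by rw [hQ.eval_smul]; field_simp

/-- A Gaussian factor beats every power of `1 + t`. -/
theorem Real.exists_one_add_pow_mul_exp_neg_mul_sq_le {c : ℝ} (hc : 0 < c) (m : ℕ) :
    ∃ K : ℝ, 0 ≤ K ∧ ∀ t : ℝ, 0 ≤ t → (1 + t) ^ m * Real.exp (-(c * t ^ 2)) ≤ K := by
  refine ⟨(2 / c) ^ m * m.factorial * Real.exp c, by positivity, fun t ht ↦ ?_⟩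
  have hsq : 1 + t ≤ 2 / c * (c + c * t ^ 2) := by
    have : 2 / c * (c + c * t ^ 2) = 2 * (1 + t ^ 2) := by field_simp
    rw [this]
    nlinarith [sq_nonneg (t - 1)]
  have hexp : (c + c * t ^ 2) ^ m ≤ m.factorial * Real.exp (c + c * t ^ 2) := by
    have := Real.pow_div_factorial_le_exp (x := c + c * t ^ 2) (by positivity) m
    rwa [div_le_iff₀' (by positivity)] at this
  calc (1 + t) ^ m * Real.exp (-(c * t ^ 2))
      ≤ (2 / c * (c + c * t ^ 2)) ^ m * Real.exp (-(c * t ^ 2)) := by gcongr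
    _ = (2 / c) ^ m * (c + c * t ^ 2) ^ m * Real.exp (-(c * t ^ 2)) := by rw [mul_pow]
    _ ≤ (2 / c) ^ m * (m.factorial * Real.exp (c + c * t ^ 2)) * Real.exp (-(c * t ^ 2)) := by
        gcongr
    _ = (2 / c) ^ m * m.factorial * Real.exp c := by
        rw [Real.exp_add, Real.exp_neg]
        field_simp

/-- A polynomial times the Gaussian weight of a positive definite quadratic form is integrable. -/
theorem MvPolynomial.IsHomogeneous.integrable_eval_mul_exp_neg {σ : Type*} [Fintype σ]
    {Q : MvPolynomial σ ℝ} (hQ : Q.IsHomogeneous 2)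
    (hpos : ∀ x : σ → ℝ, x ≠ 0 → 0 < eval x Q) (p : MvPolynomial σ ℝ) :
    Integrable fun x : σ → ℝ ↦ eval x p * Real.exp (-(eval x Q)) := by
  obtain ⟨c, hc, hcoer⟩ := hQ.exists_mul_norm_sq_le_eval hpos
  obtain ⟨C, k, hC, hp⟩ := p.exists_abs_eval_le
  set N : ℕ := Fintype.card σ + 1 with hN
  obtain ⟨K, -, hbound⟩ := Real.exists_one_add_pow_mul_exp_neg_mul_sq_le hc (k + N)
  have hint : Integrable fun x : σ → ℝ ↦ C * K * (1 + ‖x‖) ^ (-(N : ℝ)) :=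
    (integrable_one_add_norm (by simp [hN])).const_mul _
  refine hint.mono' (p.continuous_eval.mul
    (Real.continuous_exp.comp Q.continuous_eval.neg)).aestronglyMeasurable (ae_of_all _ fun x ↦ ?_)
  have hx : 0 < 1 + ‖x‖ := by positivity
  rw [norm_mul, Real.norm_eq_abs, Real.norm_eq_abs, Real.abs_exp, Real.rpow_neg hx.le,
    Real.rpow_natCast, ← div_eq_mul_inv, le_div_iff₀ (by positivity)]
  calc |eval x p| * Real.exp (-(eval x Q)) * (1 + ‖x‖) ^ N
      ≤ C * (1 + ‖x‖) ^ k * Real.exp (-(c * ‖x‖ ^ 2)) * (1 + ‖x‖) ^ N := by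
        gcongr
        · exact hp x
        · exact hcoer x
    _ = C * ((1 + ‖x‖) ^ (k + N) * Real.exp (-(c * ‖x‖ ^ 2))) := by ring
    _ ≤ C * K := by gcongr; exact hbound _ (norm_nonneg x)

/-- If a function and its line derivative in a fixed direction are integrable, then the integral
of the line derivative is zero. -/
theorem integral_eq_zero_of_hasLineDerivAt_of_integrable {E : Type*} [NormedAddCommGroup E]
    [NormedSpace ℝ E] [FiniteDimensional ℝ E] [MeasurableSpace E] [BorelSpace E]
    {μ : Measure E} [μ.IsAddHaarMeasure] {g g' : E → ℝ} {v : E}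
    (hderiv : ∀ x, HasLineDerivAt ℝ g (g' x) x v) (hg' : Integrable g' μ) (hg : Integrable g μ) :
    ∫ x, g' x ∂μ = 0 := by
  have hparts := integral_bilinear_hasLineDerivAt_right_eq_neg_left_of_integrable (μ := μ)
    (f := fun _ ↦ (1 : ℝ)) (f' := fun _ ↦ 0) (g := g) (g' := g') (v := v)
    (B := ContinuousLinearMap.mul ℝ ℝ) (by simp) (by simpa using hg') (by simpa using hg)
    (fun x _ ↦ hasDerivAt_const (0 : ℝ) (1 : ℝ)) (fun x _ ↦ hderiv x)
  simpa using hparts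

theorem gaussian_stokes_even (n : ℕ) (hn : 1 ≤ n) (Q q : MvPolynomial (Fin n) ℝ)
    (hQ : Q.IsHomogeneous 2)
    (hpos : ∀ x : Fin n → ℝ, x ≠ 0 → 0 < eval x Q) (i : Fin n) :
    ∫ x : Fin n → ℝ,
      (eval x (pderiv i q) - eval x q * eval x (pderiv i Q)) * Real.exp (-(eval x Q)) = 0 := by
  refine integral_eq_zero_of_hasLineDerivAt_of_integrable (v := Pi.single i 1)
    (g := fun x ↦ eval x q * Real.exp (-(eval x Q))) (fun x ↦ ?_) ?_
    (hQ.integrable_eval_mul_exp_neg hpos q)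
  · have hq : HasDerivAt _ _ _ := q.hasLineDerivAt_eval i x
    have hQ' : HasDerivAt _ _ _ := Q.hasLineDerivAt_eval i x
    have hmul := hq.fun_mul hQ'.fun_neg.exp
    unfold HasLineDerivAt
    convert! hmul using 1
    simp only [zero_smul, add_zero]
    ring
  · simpa using hQ.integrable_eval_mul_exp_neg hpos (pderiv i q - q * pderiv i Q)
end

section
/- Let d ≥ 1, k ≥ 1 and let a₁,…,a_{2k} be vectors in ℝ^d. Then the Gaussian expectation of the product of the corresponding linear functions equals the sum over all perfect pairings: (∫_{ℝ^d} ∏_{j=1}^{2k} ⟨aⱼ, x⟩ · e^{−‖x‖²/2} dx) / (∫_{ℝ^d} e^{−‖x‖²/2} dx) = Σ_σ ∏_{i : i < σ(i)} ⟨a_i, a_{σ(i)}⟩, where the sum ranges over all fixed-point-free involutions σ of {1,…,2k} (equivalently, over all chord diagrams, i.e. partitions of {1,…,2k} into k two-element blocks) and ⟨-,-⟩ denotes the Euclidean inner product. -/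
open MeasureTheory

section Pairings

variable {ι R : Type*} [Fintype ι] [LinearOrder ι] [CommSemiring R]

/-- The involutions of `ι` whose set of moved points is exactly `S`, that is, the perfect pairings
of `S`. -/
def pairings (S : Finset ι) : Finset (Equiv.Perm ι) :=
  Finset.univ.filter fun σ => (∀ i, σ (σ i) = i) ∧ ∀ i, σ i ≠ i ↔ i ∈ S

theorem mem_pairings {S : Finset ι} {σ : Equiv.Perm ι} :
    σ ∈ pairings S ↔ (∀ i, σ (σ i) = i) ∧ ∀ i, σ i ≠ i ↔ i ∈ S := by
  simp [pairings]

/-- The sum over all perfect pairings of `S` of the product of the weights of the pairs. -/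
def pairingSum (g : ι → ι → R) (S : Finset ι) : R :=
  ∑ σ ∈ pairings S, ∏ i ∈ Finset.univ.filter (fun i => i < σ i), g i (σ i)

theorem pairingSum_empty (g : ι → ι → R) : pairingSum g ∅ = 1 := by
  have h : pairings (∅ : Finset ι) = {1} := by
    ext σ
    simp only [mem_pairings, Finset.mem_singleton, Finset.notMem_empty, iff_false, not_not]
    constructor
    · rintro ⟨-, h⟩
      exact Equiv.ext h
    · rintro rfl
      simp
  simp [pairingSum, h]

theorem swap_mul_mem_pairings_erase {S : Finset ι} {σ : Equiv.Perm ι} (hσ : σ ∈ pairings S)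
    (m : ι) : Equiv.swap m (σ m) * σ ∈ pairings ((S.erase m).erase (σ m)) := by
  rw [mem_pairings] at hσ ⊢
  obtain ⟨h1, h2⟩ := hσ
  have key : ∀ i, (Equiv.swap m (σ m) * σ) i = if i = m ∨ i = σ m then i else σ i := by
    intro i
    have := h1 i
    have := h1 m
    simp only [Equiv.Perm.mul_apply, Equiv.swap_apply_def]
    grind
  constructor
  · intro i
    rw [key, key]
    have := h1 i
    have := h1 m
    grind
  · intro i
    rw [key]
    have := h2 i
    grind

theorem swap_mul_mem_pairings {S : Finset ι} {m j : ι} {τ : Equiv.Perm ι} (hm : m ∈ S)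
    (hj : j ∈ S.erase m) (hτ : τ ∈ pairings ((S.erase m).erase j)) :
    Equiv.swap m j * τ ∈ pairings S ∧ (Equiv.swap m j * τ) m = j := by
  rw [mem_pairings] at hτ
  rw [mem_pairings]
  obtain ⟨h1, h2⟩ := hτ
  have hm1 := h2 m
  have hj1 := h2 j
  have key : ∀ i, (Equiv.swap m j * τ) i = if i = m then j else if i = j then m else τ i := by
    intro i
    have := h1 i
    simp only [Equiv.Perm.mul_apply, Equiv.swap_apply_def]
    grind
  refine ⟨⟨fun i => ?_, fun i => ?_⟩, ?_⟩
  · rw [key, key]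
    have := h1 i
    grind
  · rw [key]
    have := h2 i
    grind
  · rw [key]
    simp

theorem prod_swap_mul_of_mem_pairings (g : ι → ι → R) {S : Finset ι} {m j : ι}
    {τ : Equiv.Perm ι} (hmj : m < j) (hτ : τ ∈ pairings ((S.erase m).erase j)) :
    ∏ i ∈ Finset.univ.filter (fun i => i < (Equiv.swap m j * τ) i), g i ((Equiv.swap m j * τ) i) =
      g m j * ∏ i ∈ Finset.univ.filter (fun i => i < τ i), g i (τ i) := by
  rw [mem_pairings] at hτ
  obtain ⟨h1, h2⟩ := hτ
  have hm : τ m = m := by have := h2 m; grind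
  have hj : τ j = j := by have := h2 j; grind
  have key : ∀ i, (Equiv.swap m j * τ) i = if i = m then j else if i = j then m else τ i := by
    intro i
    have := h1 i
    simp only [Equiv.Perm.mul_apply, Equiv.swap_apply_def]
    grind
  have hfilter : Finset.univ.filter (fun i => i < (Equiv.swap m j * τ) i) =
      insert m (Finset.univ.filter fun i => i < τ i) := by
    ext i
    simp only [Finset.mem_filter, Finset.mem_univ, true_and, Finset.mem_insert, key]
    grind
  rw [hfilter, Finset.prod_insert (by simp [hm]), key, if_pos rfl]
  congr 1
  refine Finset.prod_congr rfl fun i hi => ?_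
  rw [key]
  simp only [Finset.mem_filter, Finset.mem_univ, true_and] at hi
  grind

theorem pairingSum_eq_sum_erase (g : ι → ι → R) {S : Finset ι} {m : ι} (hm : m ∈ S)
    (hmin : ∀ i ∈ S, m ≤ i) :
    pairingSum g S = ∑ j ∈ S.erase m, g m j * pairingSum g ((S.erase m).erase j) := by
  have hmaps : ∀ σ ∈ pairings S, σ m ∈ S.erase m := by
    intro σ hσ
    rw [mem_pairings] at hσ
    have := hσ.1 m
    have := hσ.2 m
    have := hσ.2 (σ m)
    grind
  rw [pairingSum, ← Finset.sum_fiberwise_of_maps_to hmaps]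
  refine Finset.sum_congr rfl fun j hj => ?_
  have hmj : m < j :=
    lt_of_le_of_ne (hmin j (Finset.mem_of_mem_erase hj)) (Finset.ne_of_mem_erase hj).symm
  rw [pairingSum, Finset.mul_sum]
  refine Finset.sum_bij' (fun σ _ => Equiv.swap m j * σ) (fun τ _ => Equiv.swap m j * τ)
    ?_ ?_ ?_ ?_ ?_
  · intro σ hσ
    obtain ⟨hS, rfl⟩ := Finset.mem_filter.1 hσ
    exact swap_mul_mem_pairings_erase hS m
  · intro τ hτ
    exact Finset.mem_filter.2 (swap_mul_mem_pairings hm hj hτ)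
  · intro σ _
    simp
  · intro τ _
    simp
  · intro σ hσ
    obtain ⟨hS, rfl⟩ := Finset.mem_filter.1 hσ
    rw [← prod_swap_mul_of_mem_pairings g hmj (swap_mul_mem_pairings_erase hS m)]
    simp

end Pairings

section Gaussian

variable {κ ι : Type*} [Fintype κ]

theorem integrable_pow_mul_exp_neg_sq_div_two (n : ℕ) :
    Integrable fun x : ℝ => x ^ n * Real.exp (-x ^ 2 / 2) := by
  have h := integrable_rpow_mul_exp_neg_mul_sq (b := 1 / 2) (by norm_num) (s := n)
    (by linarith [n.cast_nonneg (α := ℝ)])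
  refine h.congr (Filter.Eventually.of_forall fun x => ?_)
  simp only [Real.rpow_natCast]
  ring_nf

theorem integrable_eval_mul_exp_neg_sum_sq_div_two (p : MvPolynomial κ ℝ) :
    Integrable fun x : κ → ℝ =>
      MvPolynomial.eval x p * Real.exp (-(∑ l, x l ^ 2) / 2) := by
  induction p using MvPolynomial.induction_on' with
  | monomial u c =>
    have h : Integrable fun x : κ → ℝ => ∏ l, (x l ^ u l * Real.exp (-x l ^ 2 / 2)) :=
      Integrable.fintype_prod fun l => integrable_pow_mul_exp_neg_sq_div_two (u l)
    refine (h.const_mul c).congr (Filter.Eventually.of_forall fun x => ?_)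
    simp only [MvPolynomial.eval_monomial, Finset.prod_mul_distrib, ← Real.exp_sum,
      ← Finset.sum_div, Finset.sum_neg_distrib]
    rw [Finsupp.prod_fintype _ _ (by simp)]
    ring
  | add p q hp hq =>
    simp only [map_add, add_mul]
    exact hp.add hq

theorem integrable_prod_linear_mul_exp (a : ι → κ → ℝ) (S : Finset ι) :
    Integrable fun x : κ → ℝ =>
      (∏ j ∈ S, ∑ l, a j l * x l) * Real.exp (-(∑ l, x l ^ 2) / 2) := by
  have h := integrable_eval_mul_exp_neg_sum_sq_div_two
    (∏ j ∈ S, ∑ l, MvPolynomial.C (a j l) * MvPolynomial.X l)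
  simp only [map_prod, map_sum, map_mul, MvPolynomial.eval_C, MvPolynomial.eval_X] at h
  exact h

theorem hasFDerivAt_sum_mul (b x : κ → ℝ) :
    HasFDerivAt (fun x : κ → ℝ => ∑ l, b l * x l)
      (∑ l, b l • ContinuousLinearMap.proj (R := ℝ) (φ := fun _ : κ => ℝ) l) x :=
  HasFDerivAt.fun_sum fun l _ => (hasFDerivAt_apply l x).const_mul (b l)

theorem hasFDerivAt_exp_neg_sum_sq_div_two (x : κ → ℝ) :
    HasFDerivAt (fun x : κ → ℝ => Real.exp (-(∑ l, x l ^ 2) / 2))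
      (-Real.exp (-(∑ l, x l ^ 2) / 2) •
        ∑ l, x l • ContinuousLinearMap.proj (R := ℝ) (φ := fun _ : κ => ℝ) l) x := by
  have h : HasFDerivAt (fun x : κ → ℝ => ∑ l, x l ^ 2) _ x :=
    HasFDerivAt.fun_sum fun l _ => (hasFDerivAt_apply (𝕜 := ℝ) (F' := fun _ => ℝ) l x).pow 2
  refine (h.neg.mul_const (2 : ℝ)⁻¹).exp.congr_fderiv ?_
  ext v
  simp [Finset.mul_sum, div_eq_mul_inv]
  exact Finset.sum_congr rfl fun l _ => by ring

/-- Gaussian integration by parts in the direction of the first factor. -/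
theorem integral_linear_mul_prod_linear_mul_exp [DecidableEq ι] (a : ι → κ → ℝ) (b : κ → ℝ)
    (S : Finset ι) :
    ∫ x : κ → ℝ, ((∑ l, b l * x l) * ∏ j ∈ S, ∑ l, a j l * x l) *
        Real.exp (-(∑ l, x l ^ 2) / 2) =
      ∑ j ∈ S, (∑ l, b l * a j l) *
        ∫ x : κ → ℝ, (∏ i ∈ S.erase j, ∑ l, a i l * x l) * Real.exp (-(∑ l, x l ^ 2) / 2) := by
  have hf (x : κ → ℝ) := HasFDerivAt.finsetProd (u := S)
    (g := fun j (x : κ → ℝ) => ∑ l, a j l * x l) fun j _ => hasFDerivAt_sum_mul (a j) x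
  have hfb (x : κ → ℝ) : fderiv ℝ (fun x : κ → ℝ => ∏ j ∈ S, ∑ l, a j l * x l) x b =
      ∑ j ∈ S, (∑ l, b l * a j l) * ∏ i ∈ S.erase j, ∑ l, a i l * x l := by
    rw [(hf x).fderiv]
    simp [mul_comm]
  have hgb (x : κ → ℝ) : fderiv ℝ (fun x : κ → ℝ => Real.exp (-(∑ l, x l ^ 2) / 2)) x b =
      -((∑ l, b l * x l) * Real.exp (-(∑ l, x l ^ 2) / 2)) := by
    rw [(hasFDerivAt_exp_neg_sum_sq_div_two x).fderiv]
    simp [mul_comm]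
  have hint (j : ι) := (integrable_prod_linear_mul_exp a (S.erase j)).const_mul (∑ l, b l * a j l)
  have hfg (x : κ → ℝ) : fderiv ℝ (fun x : κ → ℝ => ∏ j ∈ S, ∑ l, a j l * x l) x b *
      Real.exp (-(∑ l, x l ^ 2) / 2) = ∑ j ∈ S, (∑ l, b l * a j l) *
        ((∏ i ∈ S.erase j, ∑ l, a i l * x l) * Real.exp (-(∑ l, x l ^ 2) / 2)) := by
    rw [hfb, Finset.sum_mul]
    exact Finset.sum_congr rfl fun j _ => mul_assoc _ _ _
  have hlin : Integrable fun x : κ → ℝ => (∏ j ∈ S, ∑ l, a j l * x l) *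
      fderiv ℝ (fun x : κ → ℝ => Real.exp (-(∑ l, x l ^ 2) / 2)) x b := by
    have h := (integrable_prod_linear_mul_exp (fun o : Option ι => o.elim b a)
      (Finset.insertNone S)).neg
    refine h.congr (Filter.Eventually.of_forall fun x => ?_)
    simp only [hgb, Pi.neg_apply, Finset.prod_insertNone, Option.elim_none, Option.elim_some]
    ring
  have hparts := integral_mul_fderiv_eq_neg_fderiv_mul_of_integrable
    (by simpa only [hfg] using integrable_finsetSum S fun j _ => hint j) hlin
    (integrable_prod_linear_mul_exp a S) (fun x _ => (hf x).differentiableAt)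
    (fun x _ => (hasFDerivAt_exp_neg_sum_sq_div_two x).differentiableAt)
  calc
    _ = -∫ x : κ → ℝ, (∏ j ∈ S, ∑ l, a j l * x l) *
        fderiv ℝ (fun x : κ → ℝ => Real.exp (-(∑ l, x l ^ 2) / 2)) x b := by
      rw [← integral_neg]
      refine integral_congr_ae (Filter.Eventually.of_forall fun x => ?_)
      simp only [hgb]
      ring
    _ = ∫ x : κ → ℝ, fderiv ℝ (fun x : κ → ℝ => ∏ j ∈ S, ∑ l, a j l * x l) x b *
        Real.exp (-(∑ l, x l ^ 2) / 2) := by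
      rw [hparts, neg_neg]
    _ = _ := by
      simp only [hfg]
      rw [integral_finsetSum _ fun j _ => hint j]
      simp only [integral_const_mul]

end Gaussian

theorem integral_prod_linear_mul_exp_eq_pairingSum {κ ι : Type*} [Fintype κ] [Fintype ι]
    [LinearOrder ι] (a : ι → κ → ℝ) (S : Finset ι) :
    ∫ x : κ → ℝ, (∏ j ∈ S, ∑ l, a j l * x l) * Real.exp (-(∑ l, x l ^ 2) / 2) =
      pairingSum (fun i j => ∑ l, a i l * a j l) S *
        ∫ x : κ → ℝ, Real.exp (-(∑ l, x l ^ 2) / 2) := by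
  induction S using Finset.strongInduction with
  | H S ih =>
    rcases S.eq_empty_or_nonempty with rfl | hS
    · simp [pairingSum_empty]
    · have hm := S.min'_mem hS
      rw [pairingSum_eq_sum_erase _ hm fun i hi => S.min'_le i hi, Finset.sum_mul]
      simp_rw [← Finset.mul_prod_erase S _ hm]
      rw [integral_linear_mul_prod_linear_mul_exp]
      refine Finset.sum_congr rfl fun j _ => ?_
      rw [ih _ ((Finset.erase_subset _ _).trans_ssubset (Finset.erase_ssubset hm)), mul_assoc]

theorem wick_formula (d k : ℕ) (hd : 1 ≤ d) (hk : 1 ≤ k)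
    (a : Fin (2 * k) → Fin d → ℝ) :
    (∫ x : Fin d → ℝ, (∏ j, ∑ l, a j l * x l) * Real.exp (-(∑ l, x l ^ 2) / 2)) /
        (∫ x : Fin d → ℝ, Real.exp (-(∑ l, x l ^ 2) / 2))
      = ∑ σ ∈ Finset.univ.filter
          (fun σ : Equiv.Perm (Fin (2 * k)) => (∀ i, σ (σ i) = i) ∧ ∀ i, σ i ≠ i),
          ∏ i ∈ Finset.univ.filter (fun i => i < σ i), ∑ l, a i l * a (σ i) l := by
  have hpos : 0 < ∫ x : Fin d → ℝ, Real.exp (-(∑ l, x l ^ 2) / 2) :=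
    integral_exp_pos (by simpa using integrable_prod_linear_mul_exp a ∅)
  rw [integral_prod_linear_mul_exp_eq_pairingSum, mul_div_cancel_right₀ _ hpos.ne']
  simp [pairingSum, pairings]
end

section
/- Let n ≥ 0 and let η, γ be ℝ-linear derivations of the polynomial ring ℝ[x₁,…,xₙ] into itself. Define the divergence of a derivation η by ∇η := Σᵢ ∂ᵢ(η(xᵢ)), where ∂ᵢ is the formal partial derivative. Then the divergence of the commutator ⁅η,γ⁆ = η∘γ − γ∘η (which is again a derivation) satisfies ∇⁅η,γ⁆ = η(∇γ) − γ(∇η). -/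
open MvPolynomial

/-- A derivation of a polynomial ring in finitely many variables is a combination of partial
derivatives. -/
theorem derivation_apply_eq_sum_mul_pderiv {R σ : Type*} [CommRing R] [Fintype σ]
    (D : Derivation R (MvPolynomial σ R) (MvPolynomial σ R)) (p : MvPolynomial σ R) :
    D p = ∑ j, D (X j) * pderiv j p := by
  classical
  have hsum (q : MvPolynomial σ R) :
      (∑ j, D (X j) • pderiv j : Derivation R (MvPolynomial σ R) (MvPolynomial σ R)) q =
        ∑ j, D (X j) * pderiv j q := by
    rw [← Derivation.coeFnAddMonoidHom_apply, map_sum, Finset.sum_apply]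
    rfl
  rw [← hsum]
  refine congrArg (fun E : Derivation R _ _ => E p) (derivation_ext fun i => ?_)
  simp [hsum, pderiv_X, Pi.single_apply]

theorem pderiv_derivation_apply {R σ : Type*} [CommRing R] [Fintype σ]
    (D : Derivation R (MvPolynomial σ R) (MvPolynomial σ R)) (i : σ) (p : MvPolynomial σ R) :
    pderiv i (D p) = D (pderiv i p) + ∑ j, pderiv i (D (X j)) * pderiv j p := by
  classical
  have hX (j : σ) : D (pderiv i (X j)) = 0 := by
    rw [pderiv_X, Pi.single_apply]
    split_ifs <;> simp
  have h := derivation_apply_eq_sum_mul_pderiv ⁅(pderiv i : Derivation R _ _), D⁆ p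
  simp only [Derivation.commutator_apply, hX, sub_zero] at h
  rw [← h, add_sub_cancel]

theorem divergence_of_commutator (n : ℕ)
    (η γ : Derivation ℝ (MvPolynomial (Fin n) ℝ) (MvPolynomial (Fin n) ℝ)) :
    ∑ i, pderiv i (⁅η, γ⁆ (X i)) =
      η (∑ i, pderiv i (γ (X i))) - γ (∑ i, pderiv i (η (X i))) := by
  have hcross : ∑ i, ∑ j, pderiv i (η (X j)) * pderiv j (γ (X i)) =
      ∑ i, ∑ j, pderiv i (γ (X j)) * pderiv j (η (X i)) := by
    rw [Finset.sum_comm]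
    simp only [mul_comm]
  simp only [Derivation.commutator_apply, map_sub, map_sum, Finset.sum_sub_distrib,
    pderiv_derivation_apply η _ (γ _), pderiv_derivation_apply γ _ (η _),
    Finset.sum_add_distrib, hcross, add_sub_add_right_eq_sub]
end

section
/- Let V be a finite-dimensional real vector space with a nondegenerate symmetric bilinear form B, and let d : V → V be a linear map with d ∘ d = 0, B(d(x), y) + B(x, d(y)) = 0 for all x, y ∈ V, and ker d = d(V). Let L ⊆ V be a subspace which is B-isotropic (B vanishes identically on L) and satisfies V = L ⊕ d(V). Then the bilinear form B_d(x,y) := B(x, d(y)), restricted to L, is nondegenerate: if x ∈ L satisfies B(x, d(y)) = 0 for all y ∈ L, then x = 0. -/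
theorem propagator_nondegenerate (V : Type*) [AddCommGroup V]
    [Module ℝ V] [FiniteDimensional ℝ V] (B : V →ₗ[ℝ] V →ₗ[ℝ] ℝ)
    (hsymm : ∀ x y, B x y = B y x) (hnd : Function.Bijective B)
    (d : V →ₗ[ℝ] V) (hd2 : d ∘ₗ d = 0)
    (hinv : ∀ x y, B (d x) y + B x (d y) = 0)
    (hcontr : LinearMap.ker d = LinearMap.range d)
    (L : Submodule ℝ V) (hiso : ∀ x ∈ L, ∀ y ∈ L, B x y = 0)
    (hinf : L ⊓ LinearMap.range d = ⊥) (hsup : L ⊔ LinearMap.range d = ⊤) :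
    ∀ x ∈ L, (∀ y ∈ L, B x (d y) = 0) → x = 0 := by
  intro x hx h
  refine hnd.injective ?_
  rw [map_zero]
  ext v
  obtain ⟨l, hl, _, ⟨w, rfl⟩, rfl⟩ := Submodule.mem_sup.1 (hsup ▸ Submodule.mem_top : v ∈ _)
  obtain ⟨m, hm, _, ⟨u, rfl⟩, rfl⟩ := Submodule.mem_sup.1 (hsup ▸ Submodule.mem_top : w ∈ _)
  have hdd : d (d u) = 0 := LinearMap.congr_fun hd2 u
  simp [hiso x hx l hl, h m hm, hdd]
end
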